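/- For V(x) = log(1+|x|²), the weighted logarithmic energy of μ_V equals 1/2; that is, ∬_{ℝ²×ℝ²} ( (1/2)log(1+|x|²) + (1/2)log(1+|y|²) − log|x−y| ) dμ_V(x) dμ_V(y) = 1/2. -/

import Mathlib

open Real MeasureTheory

/-- The equilibrium measure `μ_V`, with density `1/(π(1+|x|²)²)` w.r.t. Lebesgue measure. -/
noncomputable def muV : Measure (EuclideanSpace ℝ (Fin 2)) :=
  volume.withDensity fun x => ENNReal.ofReal (1 / (π * (1 + ‖x‖^2)^2))

lemma hasDerivAt_A (r : ℝ) :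
    HasDerivAt (fun r : ℝ => -(1 / (1 + r ^ 2))) (2 * r / (1 + r ^ 2) ^ 2) r := by
  have h0 : (1 + r ^ 2 : ℝ) ≠ 0 := by positivity
  have h1 : HasDerivAt (fun r : ℝ => 1 + r ^ 2) (2 * r) r := by
    simpa using (hasDerivAt_pow 2 r).const_add 1
  have := ((hasDerivAt_const r (1:ℝ)).div h1 h0).neg
  refine this.congr_deriv ?_
  field_simp
  ring

lemma hasDerivAt_B (r : ℝ) :
    HasDerivAt (fun r : ℝ => -((1 + log (1 + r ^ 2)) / (1 + r ^ 2)))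
      (2 * r / (1 + r ^ 2) ^ 2 * log (1 + r ^ 2)) r := by
  have h0 : (1 + r ^ 2 : ℝ) ≠ 0 := by positivity
  have h1 : HasDerivAt (fun r : ℝ => 1 + r ^ 2) (2 * r) r := by
    simpa using (hasDerivAt_pow 2 r).const_add 1
  have := (((h1.log h0).const_add 1).div h1 h0).neg
  refine this.congr_deriv ?_
  field_simp
  ring

lemma hasDerivAt_C (r : ℝ) (hr : 0 < r) :
    HasDerivAt (fun r : ℝ => r * (r * log r) / (1 + r ^ 2) - 1 / 2 * log (1 + r ^ 2))
      (2 * r / (1 + r ^ 2) ^ 2 * log r) r := by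
  have h0 : (1 + r ^ 2 : ℝ) ≠ 0 := by positivity
  have h1 : HasDerivAt (fun r : ℝ => 1 + r ^ 2) (2 * r) r := by
    simpa using (hasDerivAt_pow 2 r).const_add 1
  have h2 := (hasDerivAt_id r).mul (hasDerivAt_mul_log hr.ne')
  have := (h2.div h1 h0).sub ((h1.log h0).const_mul (1/2))
  refine this.congr_deriv ?_
  simp only [id, Pi.mul_apply]
  field_simp
  ring

lemma tendsto_sq : Filter.Tendsto (fun r : ℝ => 1 + r ^ 2) Filter.atTop Filter.atTop :=
  Filter.tendsto_atTop_add_const_left _ _ (Filter.tendsto_pow_atTop two_ne_zero)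

lemma tendsto_A : Filter.Tendsto (fun r : ℝ => -(1 / (1 + r ^ 2))) Filter.atTop (nhds 0) := by
  have := (tendsto_inv_atTop_zero.comp tendsto_sq).neg
  simpa [Function.comp_def] using this

lemma tendsto_log_div : Filter.Tendsto (fun u : ℝ => log u / u) Filter.atTop (nhds 0) := by
  simpa using Real.tendsto_pow_log_div_mul_add_atTop 1 0 1 one_ne_zero

lemma tendsto_B : Filter.Tendsto (fun r : ℝ => -((1 + log (1 + r ^ 2)) / (1 + r ^ 2)))
    Filter.atTop (nhds 0) := by
  have := ((tendsto_inv_atTop_zero.comp tendsto_sq).add (tendsto_log_div.comp tendsto_sq)).neg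
  simp only [Function.comp_def, add_zero, neg_zero] at this
  refine this.congr fun r => ?_
  field_simp

lemma tendsto_C : Filter.Tendsto
    (fun r : ℝ => r * (r * log r) / (1 + r ^ 2) - 1 / 2 * log (1 + r ^ 2))
    Filter.atTop (nhds 0) := by
  -- rewrite as `-(log (1+r^-2))/2 - log r / (1+r^2)`
  have h1 : Filter.Tendsto (fun r : ℝ => log (1 + (r ^ 2)⁻¹)) Filter.atTop (nhds 0) := by
    have : Filter.Tendsto (fun r : ℝ => 1 + (r ^ 2)⁻¹) Filter.atTop (nhds (1 + 0)) :=
      (tendsto_inv_atTop_zero.comp (Filter.tendsto_pow_atTop two_ne_zero)).const_add 1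
    simpa using this.log (by norm_num)
  have h2 : Filter.Tendsto (fun r : ℝ => log r / (1 + r ^ 2)) Filter.atTop (nhds 0) := by
    refine squeeze_zero' ?_ ?_ tendsto_log_div
    · filter_upwards [Filter.eventually_ge_atTop 1] with r hr
      have := log_nonneg hr
      positivity
    · filter_upwards [Filter.eventually_ge_atTop 1] with r hr
      have := log_nonneg hr
      apply div_le_div_of_nonneg_left this (by linarith) (by nlinarith)
  have := (h1.const_mul (-(1/2))).sub h2
  simp only [mul_zero, sub_zero] at this
  refine this.congr' ?_
  filter_upwards [Filter.eventually_gt_atTop 0] with r hr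
  have : 1 + r ^ 2 = r ^ 2 * (1 + (r ^ 2)⁻¹) := by field_simp; ring
  have h3 : log (1 + r ^ 2) = 2 * log r + log (1 + (r ^ 2)⁻¹) := by
    rw [this, log_mul (by positivity) (by positivity), log_pow]; norm_num
  rw [h3]
  field_simp
  ring

lemma int_A {a : ℝ} (ha : 0 ≤ a) :
    IntegrableOn (fun r : ℝ => 2 * r / (1 + r ^ 2) ^ 2) (Set.Ioi a) ∧
    ∫ r in Set.Ioi a, 2 * r / (1 + r ^ 2) ^ 2 = 1 / (1 + a ^ 2) := by
  have hp : ∀ r ∈ Set.Ioi a, 0 ≤ 2 * r / (1 + r ^ 2) ^ 2 := fun r hr => by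
    have : 0 < r := lt_of_le_of_lt ha hr
    positivity
  refine ⟨integrableOn_Ioi_deriv_of_nonneg' (fun r _ => hasDerivAt_A r) hp tendsto_A, ?_⟩
  rw [integral_Ioi_of_hasDerivAt_of_nonneg' (fun r _ => hasDerivAt_A r) hp tendsto_A]
  simp

lemma int_B :
    IntegrableOn (fun r : ℝ => 2 * r / (1 + r ^ 2) ^ 2 * log (1 + r ^ 2)) (Set.Ioi 0) ∧
    ∫ r in Set.Ioi (0:ℝ), 2 * r / (1 + r ^ 2) ^ 2 * log (1 + r ^ 2) = 1 := by
  have hp : ∀ r ∈ Set.Ioi (0:ℝ), 0 ≤ 2 * r / (1 + r ^ 2) ^ 2 * log (1 + r ^ 2) := fun r hr => by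
    have : 0 < r := hr
    have : 0 ≤ log (1 + r ^ 2) := log_nonneg (by nlinarith)
    positivity
  refine ⟨integrableOn_Ioi_deriv_of_nonneg' (fun r _ => hasDerivAt_B r) hp tendsto_B, ?_⟩
  rw [integral_Ioi_of_hasDerivAt_of_nonneg' (fun r _ => hasDerivAt_B r) hp tendsto_B]
  simp

lemma int_C0 :
    IntegrableOn (fun r : ℝ => 2 * r / (1 + r ^ 2) ^ 2 * log r) (Set.Ioi 0) := by
  rw [← Set.Ioc_union_Ioi_eq_Ioi (zero_le_one' ℝ)]
  refine IntegrableOn.union ?_ ?_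
  · have hc : Continuous (fun r : ℝ => 2 / (1 + r ^ 2) ^ 2 * (r * log r)) := by
      have := continuous_mul_log
      have h : Continuous (fun r : ℝ => 2 / (1 + r ^ 2) ^ 2) :=
        continuous_const.div (by fun_prop) (fun r => by positivity)
      exact h.mul this
    have := (hc.continuousOn.integrableOn_Icc (μ := volume) (a := 0) (b := 1)).mono_set
      Set.Ioc_subset_Icc_self
    refine this.congr_fun (fun r _ => ?_) measurableSet_Ioc
    dsimp only
    ring
  · refine integrableOn_Ioi_deriv_of_nonneg' (fun r hr => hasDerivAt_C r ?_) (fun r hr => ?_)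
      tendsto_C
    · have : (1:ℝ) ≤ r := hr
      linarith
    · have : (1:ℝ) < r := hr
      have := log_nonneg this.le
      positivity

lemma int_C {a : ℝ} (ha : 0 ≤ a) :
    ∫ r in Set.Ioi a, 2 * r / (1 + r ^ 2) ^ 2 * log r =
      1 / 2 * log (1 + a ^ 2) - a * (a * log a) / (1 + a ^ 2) := by
  rw [integral_Ioi_of_hasDerivAt_of_tendsto ?_ (fun r hr => hasDerivAt_C r (lt_of_le_of_lt ha hr))
    (int_C0.mono_set (Set.Ioi_subset_Ioi ha)) tendsto_C]
  · ring
  · apply Continuous.continuousWithinAt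
    have h1 := continuous_mul_log
    have h2 : Continuous (fun r : ℝ => log (1 + r ^ 2)) :=
      Continuous.log (by fun_prop) (fun r => by positivity)
    exact ((continuous_id.mul h1).div (by fun_prop) (fun r => by positivity)).sub
      (continuous_const.mul h2)

lemma int_max {a : ℝ} (ha : 0 ≤ a) :
    ∫ r in Set.Ioi (0:ℝ), 2 * r / (1 + r ^ 2) ^ 2 * (log r + log⁺ (a / r)) =
      1 / 2 * log (1 + a ^ 2) := by
  have e1 : ∀ r ∈ Set.Ioi a, 2 * r / (1 + r ^ 2) ^ 2 * (log r + log⁺ (a / r)) =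
      2 * r / (1 + r ^ 2) ^ 2 * log r := fun r hr => by
    have hr' : a < r := hr
    rw [(posLog_eq_zero_iff _).2, add_zero]
    rw [abs_of_nonneg (div_nonneg ha (by linarith))]
    exact div_le_one_of_le₀ hr'.le (by linarith)
  have e2 : ∀ r ∈ Set.Ioc 0 a, 2 * r / (1 + r ^ 2) ^ 2 * (log r + log⁺ (a / r)) =
      2 * r / (1 + r ^ 2) ^ 2 * log a := fun r hr => by
    obtain ⟨h0, h1⟩ := hr
    rw [posLog_eq_log, log_div (by linarith) h0.ne']
    · ring
    · rw [abs_of_nonneg (div_nonneg ha (by linarith))]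
      exact (one_le_div h0).2 h1
  have i1 : IntegrableOn (fun r : ℝ => 2 * r / (1 + r ^ 2) ^ 2) (Set.Ioc 0 a) :=
    (int_A le_rfl).1.mono_set Set.Ioc_subset_Ioi_self
  have i2 : IntegrableOn (fun r : ℝ => 2 * r / (1 + r ^ 2) ^ 2) (Set.Ioi a) :=
    (int_A ha).1
  have i3 : IntegrableOn (fun r : ℝ => 2 * r / (1 + r ^ 2) ^ 2 * log r) (Set.Ioi a) :=
    int_C0.mono_set (Set.Ioi_subset_Ioi ha)
  have i4 : IntegrableOn (fun r : ℝ => 2 * r / (1 + r ^ 2) ^ 2 * log a) (Set.Ioc 0 a) :=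
    i1.mul_const (log a)
  have key := int_A (le_refl (0:ℝ))
  have key2 := key.2
  rw [← Set.Ioc_union_Ioi_eq_Ioi ha] at key2 ⊢
  have hd : Disjoint (Set.Ioc 0 a) (Set.Ioi a) := Set.Ioc_disjoint_Ioi le_rfl
  rw [setIntegral_union hd measurableSet_Ioi i1 i2, (int_A ha).2] at key2
  rw [setIntegral_union hd measurableSet_Ioi
    (i4.congr_fun (fun r hr => (e2 r hr).symm) measurableSet_Ioc)
    (i3.congr_fun (fun r hr => (e1 r hr).symm) measurableSet_Ioi),
    setIntegral_congr_fun measurableSet_Ioc e2, setIntegral_congr_fun measurableSet_Ioi e1,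
    int_C ha, integral_mul_const, eq_sub_of_add_eq key2]
  field_simp
  ring

/-- the density as a function of the radius -/
noncomputable def wV (r : ℝ) : ℝ := 1 / (π * (1 + r ^ 2) ^ 2)

lemma wV_pos (r : ℝ) : 0 < wV r := by unfold wV; positivity

lemma wV_le (r : ℝ) : wV r ≤ 1 := by
  unfold wV
  rw [div_le_one (by positivity)]
  have h1 : (1:ℝ) ≤ π := by linarith [pi_gt_three]
  have h2 : (1:ℝ) ≤ (1 + r ^ 2) ^ 2 := one_le_pow₀ (by nlinarith [sq_nonneg r])
  nlinarith

lemma wV_cont : Continuous wV := by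
  unfold wV
  exact continuous_const.div (by fun_prop) (fun r => by positivity)

lemma rad_iff (f : ℝ → ℝ) : Integrable (fun y : ℂ => wV ‖y‖ * f ‖y‖) ↔
    IntegrableOn (fun r : ℝ => 2 * r / (1 + r ^ 2) ^ 2 * f r) (Set.Ioi 0) := by
  rw [integrable_fun_norm_addHaar (volume : Measure ℂ) (f := fun r => wV r * f r)]
  simp only [Complex.finrank_real_complex, Nat.add_one_sub_one, pow_one, smul_eq_mul]
  have h : (fun r : ℝ => 2 * r / (1 + r ^ 2) ^ 2 * f r) =
      fun r => (2 * π) * (r * (wV r * f r)) := by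
    ext r
    unfold wV
    field_simp
  rw [h]
  unfold IntegrableOn
  rw [integrable_const_mul_iff (by simp [pi_ne_zero])]

lemma rad_int (f : ℝ → ℝ) : ∫ y : ℂ, wV ‖y‖ * f ‖y‖ =
    ∫ r in Set.Ioi (0:ℝ), 2 * r / (1 + r ^ 2) ^ 2 * f r := by
  rw [integral_fun_norm_addHaar (volume : Measure ℂ) (f := fun r => wV r * f r)]
  simp only [Complex.finrank_real_complex, Nat.add_one_sub_one, pow_one, smul_eq_mul]
  have h : (fun r : ℝ => 2 * r / (1 + r ^ 2) ^ 2 * f r) =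
      fun r => (2 * π) * (r * (wV r * f r)) := by
    ext r
    unfold wV
    field_simp
  rw [h, integral_const_mul]
  simp [Measure.real, Complex.volume_ball]
  ring

lemma w_int : Integrable (fun y : ℂ => wV ‖y‖) ∧ ∫ y : ℂ, wV ‖y‖ = 1 := by
  have h1 := (rad_iff (fun _ => 1)).2 (by simpa using (int_A le_rfl).1)
  have h2 := rad_int (fun _ => 1)
  simp only [mul_one] at h1 h2
  exact ⟨h1, by rw [h2, (int_A le_rfl).2]; norm_num⟩

lemma wlog_int : Integrable (fun y : ℂ => wV ‖y‖ * log (1 + ‖y‖ ^ 2)) ∧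
    ∫ y : ℂ, wV ‖y‖ * log (1 + ‖y‖ ^ 2) = 1 :=
  ⟨(rad_iff (fun r => log (1 + r ^ 2))).2 int_B.1, by
    rw [rad_int (fun r => log (1 + r ^ 2)), int_B.2]⟩

lemma log_loc : Integrable ((Metric.ball (0:ℂ) 1).indicator fun y => |log ‖y‖|) := by
  rw [integrable_indicator_iff measurableSet_ball,
    integrableOn_fun_norm_addHaar (volume : Measure ℂ) (f := fun r => |log r|)]
  simp only [Complex.finrank_real_complex, Nat.add_one_sub_one, pow_one, smul_eq_mul]
  have hc := (continuous_mul_log.abs.continuousOn.integrableOn_Icc (μ := volume)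
    (a := 0) (b := 1)).mono_set Set.Ioo_subset_Icc_self
  refine hc.congr_fun (fun r hr => ?_) measurableSet_Ioo
  simp [abs_mul, abs_of_pos hr.1]

lemma abs_log_bound (x y : ℂ) : |wV ‖y‖ * log ‖x - y‖| ≤
    wV ‖y‖ * (log (1 + ‖x‖) + log 2) + wV ‖y‖ * log (1 + ‖y‖ ^ 2) +
      (Metric.ball (0:ℂ) 1).indicator (fun y => |log ‖y‖|) (x - y) := by
  have hw := wV_pos ‖y‖
  have hw1 := wV_le ‖y‖
  have hx := norm_nonneg x
  have hy := norm_nonneg y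
  have l1 : 0 ≤ log (1 + ‖x‖) := log_nonneg (by linarith)
  have l2 : 0 ≤ log 2 := log_nonneg (by norm_num)
  have l3 : 0 ≤ log (1 + ‖y‖ ^ 2) := log_nonneg (by nlinarith)
  rw [abs_mul, abs_of_pos hw]
  by_cases h : ‖x - y‖ < 1
  · rw [Set.indicator_of_mem (by simpa using h)]
    have : wV ‖y‖ * |log ‖x - y‖| ≤ |log ‖x - y‖| :=
      mul_le_of_le_one_left (abs_nonneg _) hw1
    have : 0 ≤ wV ‖y‖ * (log (1 + ‖x‖) + log 2) + wV ‖y‖ * log (1 + ‖y‖ ^ 2) := by positivity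
    linarith
  · rw [Set.indicator_of_notMem (by simpa using h), add_zero, ← mul_add]
    push Not at h
    refine mul_le_mul_of_nonneg_left ?_ hw.le
    rw [abs_of_nonneg (log_nonneg h), ← log_mul (by positivity) (by positivity),
      ← log_mul (by positivity) (by positivity)]
    refine log_le_log (by linarith) ?_
    have := norm_sub_le x y
    nlinarith [sq_nonneg (‖y‖ - 1), mul_nonneg hx (sq_nonneg ‖y‖)]

lemma wker_int (x : ℂ) : Integrable (fun y : ℂ => wV ‖y‖ * log ‖x - y‖) := by
  refine Integrable.mono' (((w_int.1.mul_const _).add wlog_int.1).add (log_loc.comp_sub_left x)) ?_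
    (Filter.Eventually.of_forall (abs_log_bound x))
  have := wV_cont.measurable
  exact Measurable.aestronglyMeasurable (by fun_prop)

lemma circ (x y : ℂ) (hy : y ≠ 0) :
    ∫ θ in (0:ℝ)..2 * π, wV ‖y‖ * log ‖x - circleMap 0 1 θ * y‖ =
      2 * π * (wV ‖y‖ * (log ‖y‖ + log⁺ (‖x‖ / ‖y‖))) := by
  have h := circleAverage_log_norm_sub_const_eq_log_radius_add_posLog
    (c := 0) (a := x / y) (R := 1) one_ne_zero
  have hi : IntervalIntegrable (fun θ => log ‖circleMap 0 1 θ - x / y‖) volume 0 (2 * π) :=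
    circleIntegrable_log_norm_sub_const (a := x / y) (c := 0) 1
  rw [circleAverage_def, smul_eq_mul] at h
  simp only [log_one, zero_add, inv_one, one_mul, zero_sub, norm_neg, norm_div] at h
  rw [intervalIntegral.integral_const_mul]
  have e : ∫ θ in (0:ℝ)..2 * π, log ‖x - circleMap 0 1 θ * y‖ =
      ∫ θ in (0:ℝ)..2 * π, (log ‖y‖ + log ‖circleMap 0 1 θ - x / y‖) := by
    have hz : ∀ᵐ θ : ℝ, θ ∈ Set.uIoc 0 (2 * π) → circleMap 0 1 θ - x / y ≠ 0 := by
      have h0 := ((Set.countable_singleton (x / y)).preimage_circleMap 0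
        (one_ne_zero (α := ℝ))).measure_zero volume
      filter_upwards [compl_mem_ae_iff.2 h0] with θ hθ _
      rw [sub_ne_zero]
      simpa using hθ
    refine intervalIntegral.integral_congr_ae ?_
    filter_upwards [hz] with θ hθ hm
    have hθ := hθ hm
    rw [← log_mul (by simpa using hy) (by simpa using hθ), ← norm_mul, norm_sub_rev]
    congr 2
    field_simp
  rw [e, intervalIntegral.integral_add (by simp) hi, intervalIntegral.integral_const, ← h]
  generalize ∫ θ in (0:ℝ)..2 * π, log ‖circleMap 0 1 θ - x / y‖ = J
  simp only [sub_zero, smul_eq_mul]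
  field_simp

lemma rot (x : ℂ) (θ : ℝ) (F : ℝ → ℝ) :
    ∫ y : ℂ, F (wV ‖y‖ * log ‖x - circleMap 0 1 θ * y‖) =
      ∫ y : ℂ, F (wV ‖y‖ * log ‖x - y‖) := by
  have := (rotation (Circle.exp θ)).measurePreserving.integral_comp
    (rotation (Circle.exp θ)).toHomeomorph.measurableEmbedding
    (fun y : ℂ => F (wV ‖y‖ * log ‖x - y‖))
  simpa [rotation_apply, circleMap] using this

lemma rot_int (x : ℂ) (θ : ℝ) :
    Integrable (fun y : ℂ => wV ‖y‖ * log ‖x - circleMap 0 1 θ * y‖) := by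
  have := ((rotation (Circle.exp θ)).measurePreserving.integrable_comp_emb
    (rotation (Circle.exp θ)).toHomeomorph.measurableEmbedding).2 (wker_int x)
  simpa [Function.comp_def, rotation_apply, circleMap] using this

lemma potential (x : ℂ) : ∫ y : ℂ, wV ‖y‖ * log ‖x - y‖ = 1 / 2 * log (1 + ‖x‖ ^ 2) := by
  have hI : Integrable (Function.uncurry fun (θ : ℝ) (y : ℂ) =>
      wV ‖y‖ * log ‖x - circleMap 0 1 θ * y‖)
      ((volume.restrict (Set.uIoc 0 (2 * π))).prod volume) := by
    have hm : Measurable (Function.uncurry fun (θ : ℝ) (y : ℂ) =>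
        wV ‖y‖ * log ‖x - circleMap 0 1 θ * y‖) := by
      have := wV_cont.measurable
      have := (continuous_circleMap 0 1).measurable
      unfold Function.uncurry
      fun_prop
    rw [integrable_prod_iff hm.aestronglyMeasurable]
    refine ⟨Filter.Eventually.of_forall fun θ => rot_int x θ, ?_⟩
    simp only [Function.uncurry, rot x _ (fun t => ‖t‖)]
    have : IsFiniteMeasure ((volume : Measure ℝ).restrict (Set.uIoc 0 (2 * π))) :=
      ⟨by simp [Set.uIoc]⟩
    exact integrable_const _
  have hs := intervalIntegral_integral_swap hI
  simp only [rot x _ (fun t => t)] at hs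
  have hae : ∀ᵐ y : ℂ, ∫ θ in (0:ℝ)..2 * π, wV ‖y‖ * log ‖x - circleMap 0 1 θ * y‖ =
      2 * π * (wV ‖y‖ * (log ‖y‖ + log⁺ (‖x‖ / ‖y‖))) := by
    filter_upwards [Measure.ae_ne volume (0:ℂ)] with y hy using circ x y hy
  rw [integral_congr_ae hae, integral_const_mul,
    rad_int (fun r => log r + log⁺ (‖x‖ / r)), int_max (norm_nonneg x),
    intervalIntegral.integral_const, smul_eq_mul, sub_zero] at hs
  exact mul_left_cancel₀ (by positivity) hs

lemma inner_int (x : ℂ) : ∫ y : ℂ, wV ‖y‖ * ((1/2) * log (1 + ‖x‖^2) + (1/2) * log (1 + ‖y‖^2)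
    - log ‖x - y‖) = 1 / 2 := by
  have e : ∀ y : ℂ, wV ‖y‖ * ((1/2) * log (1 + ‖x‖^2) + (1/2) * log (1 + ‖y‖^2) - log ‖x - y‖) =
      wV ‖y‖ * ((1/2) * log (1 + ‖x‖^2)) + (1/2) * (wV ‖y‖ * log (1 + ‖y‖^2))
        - wV ‖y‖ * log ‖x - y‖ := fun y => by ring
  simp only [e]
  have h1 := w_int.1.mul_const ((1/2) * log (1 + ‖x‖^2))
  have h2 := wlog_int.1.const_mul (1/2)
  have h12 : Integrable (fun y : ℂ => wV ‖y‖ * ((1/2) * log (1 + ‖x‖^2)) +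
      (1/2) * (wV ‖y‖ * log (1 + ‖y‖^2))) := h1.add h2
  rw [integral_sub h12 (wker_int x), integral_add h1 h2, integral_mul_const,
    integral_const_mul, potential, w_int.2, wlog_int.2]
  ring

/-- the isometry with the complex plane -/
noncomputable def eV : EuclideanSpace ℝ (Fin 2) ≃ₗᵢ[ℝ] ℂ := Complex.orthonormalBasisOneI.repr.symm

lemma integral_muV (g : EuclideanSpace ℝ (Fin 2) → ℝ) (G : ℂ → ℝ) (h : ∀ y, g y = G (eV y)) :
    ∫ y, g y ∂muV = ∫ z : ℂ, wV ‖z‖ * G z := by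
  unfold muV
  have hm : Measurable (fun y : EuclideanSpace ℝ (Fin 2) => wV ‖y‖) :=
    (wV_cont.comp continuous_norm).measurable
  change ∫ y, g y ∂(volume.withDensity fun x => ENNReal.ofReal (wV ‖x‖)) = _
  rw [integral_withDensity_eq_integral_toReal_smul hm.ennreal_ofReal (by simp)]
  rw [← eV.measurePreserving.integral_comp eV.toHomeomorph.measurableEmbedding]
  refine integral_congr_ae (Filter.Eventually.of_forall fun y => ?_)
  have := (wV_pos ‖y‖).le
  simp only [ENNReal.toReal_ofReal this, smul_eq_mul, h, LinearIsometryEquiv.norm_map]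

/-- The weighted logarithmic energy of `μ_V` for `V(x) = log(1+|x|²)` equals `1/2`:
`∬ ((1/2)log(1+|x|²) + (1/2)log(1+|y|²) − log|x−y|) dμ_V(x)dμ_V(y) = 1/2`. -/
theorem energy_muV_eq_half :
    ∫ x, (∫ y, ((1/2) * Real.log (1 + ‖x‖^2) + (1/2) * Real.log (1 + ‖y‖^2)
        - Real.log (dist x y)) ∂muV) ∂muV = 1/2 := by

  have h : ∀ x, (∫ y, ((1/2) * Real.log (1 + ‖x‖^2) + (1/2) * Real.log (1 + ‖y‖^2)
        - Real.log (dist x y)) ∂muV) = 1 / 2 := fun x => by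
    rw [integral_muV _ (fun z => (1/2) * log (1 + ‖eV x‖^2) + (1/2) * log (1 + ‖z‖^2)
      - log ‖eV x - z‖), inner_int]
    intro y
    rw [← dist_eq_norm]
    simp only [LinearIsometryEquiv.norm_map, LinearIsometryEquiv.dist_map]
  simp only [h]
  rw [integral_muV _ (fun _ => 1 / 2) (fun _ => rfl), integral_mul_const, w_int.2, one_mul]
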